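/- arXiv:2406.03759 — 4 statements merged into one kernel-verified Lean document; each statement's English description precedes it below -/
import Mathlib

section
/- Let $A$ be a unique factorization domain and let $I$ be a nonzero ideal of $A$. Then the following three statements are equivalent: (1) $I$ is not contained in any prime ideal of $A$ of height $1$; (2) there exist elements $f, g \in I$ such that $f$ and $g$ are relatively prime; (3) for every nonzero element $f \in A$ there exists $g \in I$ such that $f$ and $g$ are relatively prime. -/
/-- A prime ideal `P` of `A` has height one if its height, as an element of the
prime spectrum of `A`, equals `1`. -/
def Ideal.HeightOne {A : Type*} [CommRing A] (P : Ideal A) (hP : P.IsPrime) : Prop :=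
  Order.height (⟨P, hP⟩ : PrimeSpectrum A) = 1

/-- The ideal generated by a prime element of a unique factorization domain has height one. -/
theorem Ideal.heightOne_span_singleton {A : Type*} [CommRing A] [IsDomain A]
    [UniqueFactorizationMonoid A] {p : A} (hp : Prime p) (hP : (Ideal.span {p}).IsPrime) :
    (Ideal.span {p}).HeightOne hP := by
  have hbot : ∀ Q : PrimeSpectrum A, Q < ⟨Ideal.span {p}, hP⟩ → Q = ⊥ := by
    intro Q hQ
    by_contra hne
    have hne' : Q.asIdeal ≠ ⊥ := fun h => hne (PrimeSpectrum.ext h)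
    obtain ⟨q, hqQ, hq⟩ := Q.isPrime.exists_mem_prime_of_ne_bot hne'
    have hle : Q.asIdeal ≤ Ideal.span {p} := hQ.le
    have hpq : p ∣ q := Ideal.mem_span_singleton.mp (hle hqQ)
    have hqp : q ∣ p := (hp.associated_of_dvd hq hpq).symm.dvd
    refine hQ.not_ge ?_
    change Ideal.span {p} ≤ Q.asIdeal
    rw [Ideal.span_singleton_le_iff_mem]
    exact Q.asIdeal.mem_of_dvd hqp hqQ
  refine le_antisymm ?_ ?_
  · refine (Order.height_le_coe_iff (n := 1)).mpr fun Q hQ => ?_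
    rw [hbot Q hQ, Order.height_bot]
    exact zero_lt_one
  · rw [Order.one_le_iff_ne_zero, Ne, Order.height_eq_zero, isMin_iff_eq_bot]
    intro h
    have h' : Ideal.span {p} = ⊥ := congrArg PrimeSpectrum.asIdeal h
    exact hp.ne_zero (Ideal.span_singleton_eq_bot.mp h')

/-- A height one prime ideal of a unique factorization domain is generated by a prime element. -/
theorem Ideal.HeightOne.exists_eq_span_singleton {A : Type*} [CommRing A] [IsDomain A]
    [UniqueFactorizationMonoid A] {P : Ideal A} {hP : P.IsPrime} (h : P.HeightOne hP) :
    ∃ p, Prime p ∧ P = Ideal.span {p} := by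
  have hne : P ≠ ⊥ := by
    rintro rfl
    have h0 : Order.height (⟨⊥, hP⟩ : PrimeSpectrum A) = 0 := Order.height_bot _
    exact zero_ne_one (h0.symm.trans h)
  obtain ⟨p, hpP, hp⟩ := hP.exists_mem_prime_of_ne_bot hne
  have hspan : (Ideal.span {p}).IsPrime := (Ideal.span_singleton_prime hp.ne_zero).mpr hp
  refine ⟨p, hp, ?_⟩
  by_contra hPp
  have hlt : (⟨Ideal.span {p}, hspan⟩ : PrimeSpectrum A) < ⟨P, hP⟩ :=
    lt_of_le_of_ne ((Ideal.span_singleton_le_iff_mem P).mpr hpP)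
      fun e => hPp (congrArg PrimeSpectrum.asIdeal e).symm
  have hlt' := (Order.height_le_coe_iff (n := 1)).mp (le_of_eq h) _ hlt
  exact hlt'.ne (Ideal.heightOne_span_singleton hp hspan)

/-- Let `A` be a UFD and `I` a nonzero ideal of `A`. The following are equivalent:
(1) `I` is not contained in any height one prime ideal of `A`;
(2) there are relatively prime elements `f, g ∈ I`;
(3) for every nonzero `f ∈ A` there is `g ∈ I` relatively prime to `f`. -/
theorem ufd_ideal_not_le_height_one_prime_tfae
    {A : Type*} [CommRing A] [IsDomain A] [UniqueFactorizationMonoid A]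
    (I : Ideal A) (hI : I ≠ ⊥) :
    List.TFAE
      [∀ (P : Ideal A) (hP : P.IsPrime), P.HeightOne hP → ¬ I ≤ P,
       ∃ f ∈ I, ∃ g ∈ I, IsRelPrime f g,
       ∀ f : A, f ≠ 0 → ∃ g ∈ I, IsRelPrime f g] := by
  tfae_have 3 → 2 := fun h => by
    obtain ⟨f, hf, hf0⟩ := Submodule.exists_mem_ne_zero_of_ne_bot hI
    exact ⟨f, hf, h f hf0⟩
  tfae_have 2 → 1 := by
    rintro ⟨f, hf, g, hg, hfg⟩ P hP hP1 hle
    obtain ⟨p, hp, rfl⟩ := hP1.exists_eq_span_singleton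
    exact hp.not_isUnit
      (hfg (Ideal.mem_span_singleton.mp (hle hf)) (Ideal.mem_span_singleton.mp (hle hg)))
  tfae_have 1 → 3 := by
    classical
    intro h f hf
    have hprime : ∀ p ∈ (UniqueFactorizationMonoid.factors f).toFinset, Prime p := fun p hp =>
      UniqueFactorizationMonoid.prime_of_factor p (Multiset.mem_toFinset.mp hp)
    have hspan : ∀ p ∈ (UniqueFactorizationMonoid.factors f).toFinset,
        (Ideal.span {p}).IsPrime := fun p hp =>
      (Ideal.span_singleton_prime (hprime p hp).ne_zero).mpr (hprime p hp)
    have havoid := mt (Ideal.subset_union_prime (f := fun p : A => Ideal.span {p}) 0 0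
      fun p hp _ _ => hspan p hp).mp
      fun ⟨p, hp, hle⟩ =>
        h _ (hspan p hp) (Ideal.heightOne_span_singleton (hprime p hp) (hspan p hp)) hle
    obtain ⟨g, hg, hgn⟩ := Set.not_subset.mp havoid
    refine ⟨g, hg, fun d hdf hdg => ?_⟩
    by_contra hd
    obtain ⟨q, hq, hqd⟩ := WfDvdMonoid.exists_irreducible_factor hd (ne_zero_of_dvd_ne_zero hf hdf)
    obtain ⟨p, hp, hqp⟩ :=
      UniqueFactorizationMonoid.exists_mem_factors_of_dvd hf hq (hqd.trans hdf)
    exact hgn (Set.mem_biUnion (Multiset.mem_toFinset.mpr hp)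
      (Ideal.mem_span_singleton.mpr (hqp.symm.dvd.trans (hqd.trans hdg))))
  tfae_finish
end

section
/- Let $R$ be a Noetherian unique factorization domain and let $I$ be a nonzero ideal of $R$. If the $R$-module $R/I$ has no nonzero pseudo-null $R$-submodule, then $I$ is a principal ideal. -/
/-- A module `N` over a commutative Noetherian ring `R` is pseudo-null if its
annihilator ideal is not contained in any height one prime ideal of `R`. -/
def Module.IsPseudoNull (R : Type*) [CommRing R] (N : Type*) [AddCommGroup N]
    [Module R N] : Prop :=
  ∀ (P : Ideal R) (hP : P.IsPrime), P.HeightOne hP → ¬ Module.annihilator R N ≤ P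

/-- A height one prime ideal of a unique factorization domain is generated by one element. -/
theorem Ideal.HeightOne.isPrincipal {R : Type*} [CommRing R] [IsDomain R]
    [UniqueFactorizationMonoid R] {P : Ideal R} {hP : P.IsPrime} (h : P.HeightOne hP) :
    P.IsPrincipal :=
  UniqueFactorizationMonoid.isPrincipal_of_height_eq_one <|
    (PrimeSpectrum.height_eq_orderHeight ⟨P, hP⟩).trans h

/-- A nonzero ideal of a unique factorization domain is contained in a principal ideal `(d)`
which is minimal, in the sense that no `(d * p)` with `p` a nonunit contains it. -/
theorem Ideal.exists_le_span_singleton_minimal {R : Type*} [CommRing R] [IsDomain R]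
    [WfDvdMonoid R] {I : Ideal R} (hI : I ≠ ⊥) :
    ∃ d : R, I ≤ Ideal.span {d} ∧ ∀ p : R, I ≤ Ideal.span {d * p} → IsUnit p := by
  obtain ⟨a, haI, ha⟩ := Submodule.exists_mem_ne_zero_of_ne_bot hI
  obtain ⟨e, ⟨d, hde, hId⟩, hmin⟩ := (wellFounded_dvdNotUnit (α := R)).has_min
    {e : R | ∃ d : R, a = d * e ∧ I ≤ Ideal.span {d}} ⟨a, 1, by simp⟩
  have hd : d ≠ 0 := left_ne_zero_of_mul (hde ▸ ha)
  refine ⟨d, hId, fun p hp => ?_⟩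
  obtain ⟨c, hc⟩ := Ideal.mem_span_singleton.mp (hp haI)
  have he : e = c * p := mul_left_cancel₀ hd (by rw [← hde, hc]; ring)
  by_contra hpu
  refine hmin c ⟨d * p, hc, hp⟩ ⟨?_, p, hpu, he⟩
  rintro rfl
  exact ha (by rw [hc, mul_zero])

/-- Let `R` be a Noetherian UFD and `I` a nonzero ideal of `R`. If `R/I` has no nonzero
pseudo-null `R`-submodule, then `I` is principal. -/
theorem isPrincipal_of_no_pseudoNull_submodule
    {R : Type*} [CommRing R] [IsDomain R] [IsNoetherianRing R]
    [UniqueFactorizationMonoid R] (I : Ideal R) (hI : I ≠ ⊥)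
    (h : ∀ N : Submodule R (R ⧸ I), Module.IsPseudoNull R N → N = ⊥) :
    I.IsPrincipal := by
  obtain ⟨d, hId, hd⟩ := Ideal.exists_le_span_singleton_minimal hI
  suffices hN : Submodule.map I.mkQ (Ideal.span {d}) = ⊥ by
    rw [← LinearMap.le_ker_iff_map, Submodule.ker_mkQ] at hN
    exact ⟨d, le_antisymm hId hN⟩
  refine h _ fun P hP hP1 hann => ?_
  obtain ⟨p, rfl⟩ := hP1.isPrincipal
  refine hP.ne_top (Ideal.span_singleton_eq_top.mpr (hd p fun x hx => ?_))
  obtain ⟨y, rfl⟩ := Ideal.mem_span_singleton.mp (hId hx)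
  have hy : y ∈ Module.annihilator R (Submodule.map I.mkQ (Ideal.span {d})) := by
    rw [Submodule.mem_annihilator]
    rintro _ ⟨z, hz, rfl⟩
    obtain ⟨w, rfl⟩ := Ideal.mem_span_singleton.mp hz
    rw [← map_smul, Submodule.mkQ_apply, Submodule.Quotient.mk_eq_zero, smul_eq_mul,
      show y * (d * w) = w * (d * y) by ring]
    exact I.mul_mem_left w hx
  exact Ideal.mem_span_singleton.mpr
    (mul_dvd_mul_left d (Ideal.mem_span_singleton.mp (hann hy)))
end

section
/- Let $p$ be a prime number and let $\Lambda = \mathbb{Z}_p[[T]]$ be the ring of formal power series in one variable over the ring of $p$-adic integers. Let $M$ be a finitely generated torsion $\Lambda$-module. Then $M$ has no nontrivial finite $\Lambda$-submodule if and only if there exist a positive integer $r$, an injective $\Lambda$-linear map $\varphi : \Lambda^{\oplus r} \to \Lambda^{\oplus r}$, and a surjective $\Lambda$-linear map $\pi : \Lambda^{\oplus r} \to M$ whose kernel equals the image of $\varphi$ (i.e., there is an exact sequence $0 \to \Lambda^{\oplus r} \to \Lambda^{\oplus r} \to M \to 0$). -/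
/-- A nontrivial finite module over a Noetherian local ring has a nonzero element killed by the
maximal ideal. -/
lemma IsLocalRing.exists_ne_zero_forall_mem_maximalIdeal_smul_eq_zero
    (R N : Type*) [CommRing R] [IsLocalRing R] [IsNoetherianRing R] [AddCommGroup N] [Module R N]
    [Finite N] [Nontrivial N] :
    ∃ x : N, x ≠ 0 ∧ ∀ a ∈ IsLocalRing.maximalIdeal R, a • x = 0 := by
  obtain ⟨P, hP⟩ := associatedPrimes.nonempty R N
  obtain ⟨hprime, x, hx⟩ := (isAssociatedPrime_iff_exists_injective_linearMap P N).mp hP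
  have : Finite (R ⧸ P) := Finite.of_injective x hx
  have hmax : P.IsMaximal :=
    Ideal.Quotient.maximal_of_isField P (Finite.isField_of_domain (R ⧸ P))
  refine ⟨x 1, fun h => one_ne_zero (hx (h.trans (map_zero x).symm)), fun a ha => ?_⟩
  rw [← IsLocalRing.eq_maximalIdeal hmax] at ha
  rw [← map_smul, ← map_zero x]
  congr 1
  rw [Algebra.smul_def, mul_one]
  exact Ideal.Quotient.eq_zero_iff_mem.mpr ha

/-- A submodule of a module over a domain with torsion quotient has full rank. -/
lemma Submodule.finrank_eq_of_forall_exists_smul_mem {R V : Type*} [CommRing R] [IsDomain R]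
    [AddCommGroup V] [Module R V] (K : Submodule R V)
    (hK : ∀ v : V, ∃ c : R, c ≠ 0 ∧ c • v ∈ K) : Module.finrank R K = Module.finrank R V := by
  have h0 : Module.rank R (V ⧸ K) = 0 := by
    rw [rank_eq_zero_iff]
    intro x
    obtain ⟨v, rfl⟩ := K.mkQ_surjective x
    obtain ⟨c, hc, hv⟩ := hK v
    exact ⟨c, hc, (Submodule.Quotient.mk_eq_zero K).mpr hv⟩
  have := rank_quotient_add_rank_of_isDomain K
  rw [h0, zero_add] at this
  rw [Module.finrank, Module.finrank, this]

namespace PowerSeries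

/-- Vectors of power series satisfying `X • w = C a • k`, with `a` a nonzero element of a domain,
are of the form `k = X • v` and `w = C a • v`. -/
lemma exists_eq_smul_of_X_smul_eq_C_smul {A ι : Type*} [CommRing A] [IsDomain A] {a : A}
    (ha : a ≠ 0) {k w : ι → A⟦X⟧} (h : (X : A⟦X⟧) • w = C a • k) :
    ∃ v : ι → A⟦X⟧, k = (X : A⟦X⟧) • v ∧ w = C a • v := by
  have hdvd (i : ι) : ∃ v, k i = X * v := by
    have hi : X * w i = C a * k i := congrFun h i
    have h0 := congrArg constantCoeff hi
    simp only [map_mul, constantCoeff_X, zero_mul, constantCoeff_C] at h0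
    exact X_dvd_iff.mpr ((mul_eq_zero.mp h0.symm).resolve_left ha)
  choose v hv using hdvd
  refine ⟨v, funext hv, funext fun i => X_mul_cancel ?_⟩
  have hi : X * w i = C a * k i := congrFun h i
  rw [hi, hv i, Pi.smul_apply, smul_eq_mul]
  ring

instance isPrincipalIdealRing_quotient_span_X (A : Type*) [CommRing A] [IsPrincipalIdealRing A] :
    IsPrincipalIdealRing (A⟦X⟧ ⧸ Ideal.span {(X : A⟦X⟧)}) :=
  IsPrincipalIdealRing.of_surjective ((Ideal.Quotient.mk _).comp (C (R := A))) fun y => by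
    obtain ⟨f, rfl⟩ := Ideal.Quotient.mk_surjective y
    refine ⟨constantCoeff f, ?_⟩
    rw [RingHom.comp_apply, Ideal.Quotient.eq, Ideal.mem_span_singleton, X_dvd_iff]
    simp

section PadicInt

variable {p : ℕ} [Fact p.Prime]

lemma smul_eq_zmodRepr_smul {M : Type*} [AddCommGroup M] [Module ℤ_[p]⟦X⟧ M] {x : M}
    (hp : (C (p : ℤ_[p])) • x = 0) (hX : (X : ℤ_[p]⟦X⟧) • x = 0) (f : ℤ_[p]⟦X⟧) :
    f • x = (constantCoeff f).zmodRepr • x := by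
  obtain ⟨z, hz⟩ : (p : ℤ_[p]) ∣ constantCoeff f - (constantCoeff f).zmodRepr := by
    rw [← Ideal.mem_span_singleton, ← PadicInt.maximalIdeal_eq_span_p]
    exact PadicInt.sub_zmodRepr_mem _
  obtain ⟨g, hg⟩ : X ∣ f - C (constantCoeff f) := by simp [X_dvd_iff]
  have hf : f = g * X + C z * C (p : ℤ_[p]) + ((constantCoeff f).zmodRepr : ℤ_[p]⟦X⟧) := by
    rw [← map_natCast C, ← map_mul, add_assoc, ← map_add, mul_comm z, ← hz, sub_add_cancel,
      mul_comm g, ← hg, sub_add_cancel]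
  conv_lhs => rw [hf]
  rw [add_smul, add_smul, mul_smul, mul_smul, hX, hp, smul_zero, smul_zero, zero_add, zero_add,
    Nat.cast_smul_eq_nsmul]

lemma finite_span_singleton {M : Type*} [AddCommGroup M] [Module ℤ_[p]⟦X⟧ M] {x : M}
    (hp : (C (p : ℤ_[p])) • x = 0) (hX : (X : ℤ_[p]⟦X⟧) • x = 0) :
    Finite (Submodule.span ℤ_[p]⟦X⟧ {x}) := by
  refine Set.Finite.subset ((Set.finite_lt_nat p).image fun n => n • x) fun y hy => ?_
  obtain ⟨f, rfl⟩ := Submodule.mem_span_singleton.mp hy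
  exact ⟨_, PadicInt.zmodRepr_lt_p _, (smul_eq_zmodRepr_smul hp hX f).symm⟩

/-- A finite `ℤ_p⟦X⟧`-module is free as soon as `X, p` is a regular sequence on it. -/
lemma free_of_isSMulRegular_X_of_X_smul_eq_C_smul {K : Type*} [AddCommGroup K] [Module ℤ_[p]⟦X⟧ K]
    [Module.Finite ℤ_[p]⟦X⟧ K] (hX : IsSMulRegular K (X : ℤ_[p]⟦X⟧))
    (hp : ∀ k w : K, (X : ℤ_[p]⟦X⟧) • w = C (p : ℤ_[p]) • k → ∃ v, k = (X : ℤ_[p]⟦X⟧) • v) :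
    Module.Free ℤ_[p]⟦X⟧ K := by
  have hprime : (Ideal.span {(X : ℤ_[p]⟦X⟧)}).IsPrime := span_X_isPrime
  have : Module.FinitePresentation ℤ_[p]⟦X⟧ K := Module.finitePresentation_of_finite _ _
  have hjac : (X : ℤ_[p]⟦X⟧) ∈ (⊥ : Ideal ℤ_[p]⟦X⟧).jacobson := by
    rw [IsLocalRing.jacobson_eq_maximalIdeal _ bot_ne_top, IsLocalRing.mem_maximalIdeal]
    exact X_prime.not_isUnit
  have : Module.Finite (ℤ_[p]⟦X⟧ ⧸ Ideal.span {(X : ℤ_[p]⟦X⟧)}) (QuotSMulTop (X : ℤ_[p]⟦X⟧) K) :=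
    Module.Finite.of_restrictScalars_finite ℤ_[p]⟦X⟧ _ _
  have hpreg : IsSMulRegular (QuotSMulTop (X : ℤ_[p]⟦X⟧) K) (C (p : ℤ_[p])) := by
    rw [isSMulRegular_iff_right_eq_zero_of_smul]
    intro y hy
    obtain ⟨k, rfl⟩ := Submodule.mkQ_surjective _ y
    rw [← map_smul, Submodule.mkQ_apply, Submodule.Quotient.mk_eq_zero,
      Submodule.mem_smul_pointwise_iff_exists] at hy
    obtain ⟨w, -, hw⟩ := hy
    obtain ⟨v, rfl⟩ := hp k w hw
    rw [Submodule.mkQ_apply, Submodule.Quotient.mk_eq_zero]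
    exact Submodule.smul_mem_pointwise_smul v _ _ trivial
  have : Module.IsTorsionFree (ℤ_[p]⟦X⟧ ⧸ Ideal.span {(X : ℤ_[p]⟦X⟧)})
      (QuotSMulTop (X : ℤ_[p]⟦X⟧) K) := by
    refine ⟨fun a ha => ?_⟩
    obtain ⟨f, rfl⟩ := Ideal.Quotient.mk_surjective a
    have hf0 : constantCoeff f ≠ 0 := fun h => ha.ne_zero <| by
      rwa [Ideal.Quotient.eq_zero_iff_mem, Ideal.mem_span_singleton, X_dvd_iff]
    have hf : Ideal.Quotient.mk (Ideal.span {(X : ℤ_[p]⟦X⟧)}) f =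
        Ideal.Quotient.mk _ (C (constantCoeff f)) := by
      rw [Ideal.Quotient.eq, Ideal.mem_span_singleton, X_dvd_iff]
      simp
    have hreg : IsSMulRegular (QuotSMulTop (X : ℤ_[p]⟦X⟧) K) (C (constantCoeff f)) := by
      rw [PadicInt.unitCoeff_spec hf0, map_mul, map_pow]
      exact (((PadicInt.unitCoeff hf0).isUnit.map C).isSMulRegular _).mul (hpreg.pow _)
    rw [hf]
    exact hreg
  exact (Module.free_quotSMulTop_iff_free _ _ hjac hX).mp inferInstance

/-- A finite submodule of the cokernel of an injective map between free modules is trivial. -/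
lemma eq_bot_of_finite_of_injective {ι κ M : Type*} [AddCommGroup M] [Module ℤ_[p]⟦X⟧ M]
    {φ : (ι → ℤ_[p]⟦X⟧) →ₗ[ℤ_[p]⟦X⟧] (κ → ℤ_[p]⟦X⟧)} {π : (κ → ℤ_[p]⟦X⟧) →ₗ[ℤ_[p]⟦X⟧] M}
    (hφ : Function.Injective φ) (hπ : Function.Surjective π)
    (hex : LinearMap.ker π = LinearMap.range φ) (N : Submodule ℤ_[p]⟦X⟧ M) [Finite N] :
    N = ⊥ := by
  by_contra hN
  have := (Submodule.nontrivial_iff_ne_bot).mpr hN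
  obtain ⟨x, hx0, hx⟩ :=
    IsLocalRing.exists_ne_zero_forall_mem_maximalIdeal_smul_eq_zero ℤ_[p]⟦X⟧ N
  have hmem (f : ℤ_[p]⟦X⟧) (hf : ¬ IsUnit (constantCoeff f)) : f • (x : M) = 0 :=
    congrArg Subtype.val
      (hx f ((IsLocalRing.mem_maximalIdeal f).mpr (mt isUnit_iff_constantCoeff.mp hf)))
  obtain ⟨v, hv⟩ := hπ x
  have hlift (f : ℤ_[p]⟦X⟧) (hf : ¬ IsUnit (constantCoeff f)) : ∃ a, φ a = f • v := by
    rw [← LinearMap.mem_range, ← hex, LinearMap.mem_ker, map_smul, hv, hmem f hf]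
  obtain ⟨a, ha⟩ := hlift (C (p : ℤ_[p])) (by simpa using PadicInt.p_nonunit)
  obtain ⟨b, hb⟩ := hlift X (by simp)
  have hab : (X : ℤ_[p]⟦X⟧) • a = C (p : ℤ_[p]) • b :=
    hφ (by rw [map_smul, map_smul, ha, hb, smul_comm])
  obtain ⟨u, rfl, -⟩ := exists_eq_smul_of_X_smul_eq_C_smul PadicInt.prime_p.ne_zero hab
  rw [map_smul] at hb
  have hvu : φ u = v := smul_right_injective _ X_ne_zero hb
  apply hx0
  rw [← Subtype.coe_inj, ← hv, ZeroMemClass.coe_zero, ← LinearMap.mem_ker, hex]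
  exact ⟨u, hvu⟩

/-- The relation module of a finite `ℤ_p⟦X⟧`-module without nontrivial finite submodules is
free. -/
lemma free_ker_of_forall_finite_eq_bot {ι M : Type*} [Finite ι] [AddCommGroup M]
    [Module ℤ_[p]⟦X⟧ M] (hM : ∀ N : Submodule ℤ_[p]⟦X⟧ M, Finite N → N = ⊥)
    (π : (ι → ℤ_[p]⟦X⟧) →ₗ[ℤ_[p]⟦X⟧] M) : Module.Free ℤ_[p]⟦X⟧ (LinearMap.ker π) := by
  refine free_of_isSMulRegular_X_of_X_smul_eq_C_smul (smul_right_injective _ X_ne_zero) fun k w h => ?_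
  obtain ⟨v, hk, hw⟩ := exists_eq_smul_of_X_smul_eq_C_smul PadicInt.prime_p.ne_zero
    (congrArg Subtype.val h)
  have hXv : (X : ℤ_[p]⟦X⟧) • π v = 0 := by rw [← map_smul, ← hk]; exact k.2
  have hpv : C (p : ℤ_[p]) • π v = 0 := by rw [← map_smul, ← hw]; exact w.2
  have hv : π v = 0 := Submodule.span_singleton_eq_bot.mp (hM _ (finite_span_singleton hpv hXv))
  exact ⟨⟨v, hv⟩, Subtype.ext hk⟩

end PadicInt

end PowerSeries


open PowerSeries in
/-- Let `Λ = ℤ_p[[T]]` and let `M` be a finitely generated torsion `Λ`-module. Then `M`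
has no nontrivial finite `Λ`-submodule if and only if there is an exact sequence
`0 → Λ^r → Λ^r → M → 0` for some positive integer `r`. -/
theorem no_finite_submodule_iff_exists_exact_sequence
    (p : ℕ) [Fact p.Prime] (M : Type*) [AddCommGroup M]
    [Module (PowerSeries ℤ_[p]) M] [Module.Finite (PowerSeries ℤ_[p]) M]
    (htor : ∀ m : M, ∃ c : PowerSeries ℤ_[p], c ≠ 0 ∧ c • m = 0) :
    (∀ N : Submodule (PowerSeries ℤ_[p]) M, Finite N → N = ⊥) ↔
      ∃ (r : ℕ), 0 < r ∧
        ∃ (φ : (Fin r → PowerSeries ℤ_[p]) →ₗ[PowerSeries ℤ_[p]]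
              (Fin r → PowerSeries ℤ_[p]))
          (π : (Fin r → PowerSeries ℤ_[p]) →ₗ[PowerSeries ℤ_[p]] M),
          Function.Injective φ ∧ Function.Surjective π ∧
            LinearMap.ker π = LinearMap.range φ := by
  constructor
  · intro hM
    obtain ⟨n, π₀, hπ₀⟩ := Module.Finite.exists_fin' (PowerSeries ℤ_[p]) M
    let π := π₀ ∘ₗ LinearMap.funLeft (PowerSeries ℤ_[p]) (PowerSeries ℤ_[p]) Fin.castSucc
    have hπ : Function.Surjective π := hπ₀.comp
      (LinearMap.funLeft_surjective_of_injective _ _ _ (Fin.castSucc_injective n))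
    have := free_ker_of_forall_finite_eq_bot hM π
    have hrank : Module.finrank (PowerSeries ℤ_[p]) (LinearMap.ker π) = n + 1 := by
      rw [Submodule.finrank_eq_of_forall_exists_smul_mem, Module.finrank_fin_fun]
      simpa only [LinearMap.mem_ker, map_smul] using fun v => htor (π v)
    let e := (Module.finBasisOfFinrankEq (PowerSeries ℤ_[p]) _ hrank).equivFun.symm
    refine ⟨n + 1, n.succ_pos, (LinearMap.ker π).subtype ∘ₗ e, π,
      Subtype.val_injective.comp e.injective, hπ, ?_⟩
    rw [LinearEquiv.range_comp, Submodule.range_subtype]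
  · rintro ⟨r, -, φ, π, hφ, hπ, hex⟩ N _
    exact eq_bot_of_finite_of_injective hφ hπ hex N
end

section
/- Let $p$ be a prime number and let $\Lambda = \mathbb{Z}_p[[T]]$ be the ring of formal power series in one variable over the ring of $p$-adic integers. Let $M$ be a finitely generated $\Lambda$-module. Then $M$ is finite as a set if and only if the annihilator ideal of $M$ in $\Lambda$ is not contained in any prime ideal of $\Lambda$ of height $1$ (i.e., if and only if $M$ is pseudo-null). -/
open IsLocalRing PowerSeries in
/-- The maximal ideal of `ℤ_p[[T]]` is the kernel of the reduction map to `ℤ/pℤ`. -/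
theorem PadicInt.ker_toZMod_comp_constantCoeff (p : ℕ) [Fact p.Prime] :
    RingHom.ker ((PadicInt.toZMod (p := p)).comp (constantCoeff (R := ℤ_[p]))) =
      maximalIdeal (PowerSeries ℤ_[p]) :=
  eq_maximalIdeal <| RingHom.ker_isMaximal_of_surjective _ <|
    (ZMod.ringHom_surjective (PadicInt.toZMod (p := p))).comp constantCoeff_surj

open IsLocalRing PowerSeries in
theorem PadicInt.powerSeries_maximalIdeal_eq_span (p : ℕ) [Fact p.Prime] :
    maximalIdeal (PowerSeries ℤ_[p]) = Ideal.span {C (p : ℤ_[p]), X} := by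
  rw [← PadicInt.ker_toZMod_comp_constantCoeff]
  apply le_antisymm
  · intro f hf
    have hc : constantCoeff f ∈ RingHom.ker (PadicInt.toZMod (p := p)) := hf
    rw [PadicInt.ker_toZMod, PadicInt.maximalIdeal_eq_span_p, Ideal.mem_span_singleton] at hc
    obtain ⟨c, hc⟩ := hc
    rw [Ideal.mem_span_pair]
    refine ⟨C c, PowerSeries.mk fun n => coeff (n + 1) f, ?_⟩
    rw [← map_mul, mul_comm c, ← hc, add_comm]
    exact (eq_shift_mul_X_add_const f).symm
  · rw [Ideal.span_le]
    rintro f (rfl | rfl) <;> simp [RingHom.mem_ker]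

open IsLocalRing PowerSeries in
instance PadicInt.finite_residueField_powerSeries (p : ℕ) [Fact p.Prime] :
    Finite (PowerSeries ℤ_[p] ⧸ maximalIdeal (PowerSeries ℤ_[p])) := by
  rw [← PadicInt.ker_toZMod_comp_constantCoeff]
  exact Finite.of_injective _ (RingHom.kerLift_injective _)

open IsLocalRing PowerSeries in
theorem PadicInt.height_maximalIdeal_powerSeries (p : ℕ) [Fact p.Prime] :
    (maximalIdeal (PowerSeries ℤ_[p])).height = 2 := by
  apply le_antisymm
  · refine (Ideal.height_le_card_of_mem_minimalPrimes_span (s := {C (p : ℤ_[p]), X})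
      (Set.toFinite _) ?_).trans (by
        exact_mod_cast (Set.ncard_insert_le _ _).trans (by rw [Set.ncard_singleton]))
    rw [← PadicInt.powerSeries_maximalIdeal_eq_span, Ideal.minimalPrimes_eq_subsingleton_self]
    rfl
  · have hX : (Ideal.span {(X : PowerSeries ℤ_[p])}).IsPrime := span_X_isPrime
    have h₁ : (⊥ : Ideal (PowerSeries ℤ_[p])) < Ideal.span {X} := by
      simp [bot_lt_iff_ne_bot, X_ne_zero]
    have h₂ : Ideal.span {(X : PowerSeries ℤ_[p])} < maximalIdeal _ := by
      refine (le_maximalIdeal hX.ne_top).lt_of_ne fun h => ?_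
      have hp : C (p : ℤ_[p]) ∈ Ideal.span {(X : PowerSeries ℤ_[p])} := by
        rw [h, PadicInt.powerSeries_maximalIdeal_eq_span]
        exact Ideal.subset_span (by simp)
      rw [Ideal.mem_span_singleton, X_dvd_iff, constantCoeff_C, Nat.cast_eq_zero] at hp
      exact (Fact.out : p.Prime).ne_zero hp
    have h₃ := Ideal.height_add_one_le_of_lt_of_isPrime h₁
    have h₄ := Ideal.height_add_one_le_of_lt_of_isPrime h₂
    rw [Ideal.height_bot, zero_add] at h₃
    calc (2 : ℕ∞) = 1 + 1 := one_add_one_eq_two.symm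
      _ ≤ _ := by gcongr
      _ ≤ _ := h₄

theorem Ideal.heightOne_iff {A : Type*} [CommRing A] {P : Ideal A} (hP : P.IsPrime) :
    P.HeightOne hP ↔ P.height = 1 := by
  rw [Ideal.HeightOne, ← PrimeSpectrum.height_eq_orderHeight]

/-- A finite module over a commutative ring has finite quotient by its annihilator. -/
theorem Module.finite_quotient_annihilator (R M : Type*) [CommRing R] [AddCommGroup M]
    [Module R M] [Finite M] : Finite (R ⧸ Module.annihilator R M) := by
  have : Finite (AddMonoid.End M) :=
    _root_.Finite.of_injective (fun f : AddMonoid.End M => (f : M → M)) DFunLike.coe_injective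
  exact _root_.Finite.of_injective (RingHom.kerLift (Module.toAddMonoidEnd R M))
    (RingHom.kerLift_injective _)

/-- A finitely generated module whose annihilator has finite quotient is finite. -/
theorem Module.finite_of_finite_quotient_annihilator (R M : Type*) [CommRing R] [AddCommGroup M]
    [Module R M] [Module.Finite R M] [Finite (R ⧸ Module.annihilator R M)] : Finite M := by
  let : Module (R ⧸ Module.annihilator R M) M := Module.quotientAnnihilator
  have : IsScalarTower R (R ⧸ Module.annihilator R M) M :=
    Module.isTorsionBySet_annihilator R M |>.isScalarTower
  have : Module.Finite (R ⧸ Module.annihilator R M) M := .of_restrictScalars_finite R _ M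
  exact Module.finite_of_finite (R ⧸ Module.annihilator R M)

/-- In a two-dimensional Noetherian local domain, an ideal contained in no height one prime
is contained in no prime other than the maximal ideal. -/
theorem IsLocalRing.eq_maximalIdeal_of_not_le_height_one {R : Type*} [CommRing R] [IsDomain R]
    [IsLocalRing R] [IsNoetherianRing R] (hR : (maximalIdeal R).height = 2) {I P : Ideal R}
    (hI : ∀ Q : Ideal R, Q.IsPrime → Q.height = 1 → ¬ I ≤ Q) [hP : P.IsPrime] (hIP : I ≤ P) :
    P = maximalIdeal R := by
  by_contra hne
  have hlt : P < maximalIdeal R := (le_maximalIdeal hP.ne_top).lt_of_ne hne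
  have hP1 : P.height ≤ 1 := by
    have := Ideal.height_add_one_le_of_lt_of_isPrime hlt
    rw [hR, ← one_add_one_eq_two] at this
    exact (ENat.add_le_add_iff_right ENat.one_ne_top).mp this
  have hP0 : P.height = 0 := by
    by_contra h0
    exact hI P hP (le_antisymm hP1 (Order.one_le_iff_ne_zero.mpr h0)) hIP
  rw [Ideal.height_eq_zero_iff_eq_bot] at hP0
  obtain ⟨x, hx, hx0⟩ : ∃ x ∈ maximalIdeal R, x ≠ 0 := by
    refine Submodule.exists_mem_ne_zero_of_ne_bot fun hbot => ?_
    rw [hbot, Ideal.height_bot] at hR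
    exact absurd hR (by decide)
  obtain ⟨Q, hQ, -, hQ1⟩ := Ideal.exists_isPrime_height_eq (n := 1) <|
    Ideal.height_span_singleton_eq_one_of_mem_nonZeroDivisors
      (mem_nonZeroDivisors_of_ne_zero hx0) hx
  exact hI Q hQ hQ1 (hIP.trans (hP0 ▸ bot_le))

/-- Let `Λ = ℤ_p[[T]]` and let `M` be a finitely generated `Λ`-module. Then `M` is finite
as a set if and only if the annihilator ideal of `M` in `Λ` is not contained in any
height one prime ideal of `Λ`, i.e. iff `M` is pseudo-null. -/
theorem finite_iff_pseudoNull_over_powerSeries_padicInt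
    (p : ℕ) [Fact p.Prime] (M : Type*) [AddCommGroup M]
    [Module (PowerSeries ℤ_[p]) M] [Module.Finite (PowerSeries ℤ_[p]) M] :
    Finite M ↔
      ∀ (P : Ideal (PowerSeries ℤ_[p])) (hP : P.IsPrime), P.HeightOne hP →
        ¬ Module.annihilator (PowerSeries ℤ_[p]) M ≤ P := by
  constructor
  · intro _ P hP hP1 hle
    rw [Ideal.heightOne_iff] at hP1
    have := Module.finite_quotient_annihilator (PowerSeries ℤ_[p]) M
    have : Finite (PowerSeries ℤ_[p] ⧸ P) :=
      Finite.of_surjective _ (Ideal.Quotient.factor_surjective hle)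
    have hmax : P.IsMaximal :=
      Ideal.Quotient.maximal_of_isField P (Finite.isField_of_domain _)
    rw [IsLocalRing.eq_maximalIdeal hmax, PadicInt.height_maximalIdeal_powerSeries] at hP1
    exact absurd hP1 (by decide)
  · intro h
    have hrad : IsLocalRing.maximalIdeal (PowerSeries ℤ_[p]) ≤
        (Module.annihilator (PowerSeries ℤ_[p]) M).radical := by
      rw [Ideal.radical_eq_sInf]
      refine le_sInf fun P ⟨hle, hP⟩ => ?_
      exact (IsLocalRing.eq_maximalIdeal_of_not_le_height_one
        (PadicInt.height_maximalIdeal_powerSeries p)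
        (fun Q hQ hQ1 => h Q hQ ((Ideal.heightOne_iff hQ).mpr hQ1)) hle).ge
    obtain ⟨n, hn⟩ := Ideal.exists_pow_le_of_le_radical_of_fg hrad (IsNoetherian.noetherian _)
    have := Ideal.finite_quotient_pow
      (IsNoetherian.noetherian (IsLocalRing.maximalIdeal (PowerSeries ℤ_[p]))) n
    have : Finite (PowerSeries ℤ_[p] ⧸ Module.annihilator (PowerSeries ℤ_[p]) M) :=
      Finite.of_surjective _ (Ideal.Quotient.factor_surjective hn)
    exact Module.finite_of_finite_quotient_annihilator (PowerSeries ℤ_[p]) M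
end
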